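/- Every two-sided computable approximation is speedable: if {a_s} is a computable approximation of a real α such that a_s < α for infinitely many s and a_s > α for infinitely many s, then {a_s} is ρ-speedable for some rational ρ ∈ [0,1). -/

import Mathlib

open Filter

/-- A computable approximation of a real `α`: a computable sequence of
rationals in `[0,1]` converging to `α`. -/
def IsCompApprox (a : ℕ → ℚ) (α : ℝ) : Prop :=
  Computable a ∧ (∀ s, a s ∈ Set.Icc (0 : ℚ) 1) ∧
    Tendsto (fun s => (a s : ℝ)) atTop (nhds α)

/-- A d.c.e. approximation: a computable approximation with bounded variation. -/
def IsDCEApprox (a : ℕ → ℚ) (α : ℝ) : Prop :=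
  IsCompApprox a α ∧ Summable (fun s => |(a (s + 1) : ℝ) - (a s : ℝ)|)

/-- A computable order: a nondecreasing unbounded computable function. -/
def IsComputableOrder (f : ℕ → ℕ) : Prop :=
  Computable f ∧ Monotone f ∧ Tendsto f atTop atTop

/-- The liminf (in the extended reals) of `|(α - a (f s)) / (α - a s)|`. -/
noncomputable def speedLiminf (a : ℕ → ℚ) (f : ℕ → ℕ) (α : ℝ) : EReal :=
  Filter.liminf (fun s => ((|(α - (a (f s) : ℝ)) / (α - (a s : ℝ))| : ℝ) : EReal)) atTop

/-- A computable approximation `a` of `α` is `ρ`-speedable. -/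
def IsRhoSpeedable (a : ℕ → ℚ) (α : ℝ) (ρ : ℚ) : Prop :=
  (∃ q : ℚ, α = (q : ℝ)) ∨
    ∃ f, IsComputableOrder f ∧ speedLiminf a f α ≤ (((ρ : ℝ) : EReal))

/-- A computable approximation is speedable if it is `ρ`-speedable for some rational
`ρ ∈ [0,1)`. -/
def IsSpeedable (a : ℕ → ℚ) (α : ℝ) : Prop :=
  ∃ ρ : ℚ, 0 ≤ ρ ∧ ρ < 1 ∧ IsRhoSpeedable a α ρ

/-- A Solovay test: computable sequences of rationals `l i ≤ r i` in `[0,1]`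
with `Σ (r i - l i) < ∞`. -/
structure SolovayTest where
  l : ℕ → ℚ
  r : ℕ → ℚ
  comp_l : Computable l
  comp_r : Computable r
  mem_l : ∀ i, l i ∈ Set.Icc (0 : ℚ) 1
  mem_r : ∀ i, r i ∈ Set.Icc (0 : ℚ) 1
  le : ∀ i, l i ≤ r i
  summable : Summable (fun i => (r i : ℝ) - (l i : ℝ))

/-- A real `γ` is covered by a Solovay test if `γ ∈ [l i, r i]` for infinitely many `i`. -/
def SolovayTest.Covers (T : SolovayTest) (γ : ℝ) : Prop :=
  ∃ᶠ i in atTop, γ ∈ Set.Icc (T.l i : ℝ) (T.r i : ℝ)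

/-- The sequence of endpoints `l 0, r 0, l 1, r 1, …` of a Solovay test. -/
def SolovayTest.endpoints (T : SolovayTest) (n : ℕ) : ℚ :=
  if n % 2 = 0 then T.l (n / 2) else T.r (n / 2)

/-!
Suppose no computable order speeds `a` up by the factor `9 / 10`. Applied to `s ↦ s + 1` and
`s ↦ s - 1`, this makes consecutive errors eventually comparable. Hence if `a r` and `a (r + 1)` lie
on the same side of `α`, then `α` is far away from the segment between them, and if they lie on
opposite sides, then `α` is close to its midpoint. In the latter case a later term in the middle
half of the segment is closer to `α` than `a r`, and a later term far outside the segment is farther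
from `α`, each time by a definite factor. Whether `a t` is of one of these two kinds does not depend
on `α`, so the first exit `h r`, the least such `t`, is a computable function of `r`.

Although `h` is not monotone, some computable order maps `r` to `h r` and another one maps `h r` to
`r` whenever `r` is a record of `h`. The former speeds `a` up at exits of the first kind, the latter
at exits of the second kind, so it is enough that `a` switches sides between `r` and `r + 1` for
infinitely many records `r`. Every `s` lies in an interval `[r, h r - 1)` with `r` a record, and if
`a` does not switch sides at `r`, then it stays on one side of the distant `α` until `h r`. So each
of the infinitely many switches forces one at a record.
-/

open Encodable

section Predicates

variable {α β : Type*} [Primcodable α] [Primcodable β] {p q : α → Prop}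

theorem computablePred_and (hp : ComputablePred p) (hq : ComputablePred q) :
    ComputablePred fun x => p x ∧ q x := by
  classical
  exact ((Primrec.and.to_comp.comp hp.decide hq.decide).of_eq fun x =>
    (Bool.decide_and (p x) (q x)).symm).computablePred

theorem computablePred_or (hp : ComputablePred p) (hq : ComputablePred q) :
    ComputablePred fun x => p x ∨ q x := by
  classical
  exact ((Primrec.or.to_comp.comp hp.decide hq.decide).of_eq fun x =>
    (Bool.decide_or (p x) (q x)).symm).computablePred

theorem computablePred_comp (hp : ComputablePred p) {f : β → α} (hf : Computable f) :
    ComputablePred fun x => p (f x) := by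
  classical
  exact (hp.decide.comp hf).computablePred

end Predicates

section NaturalNumbers

theorem primrec_nat_gcd : Primrec₂ Nat.gcd := by
  have hdvd : PrimrecRel ((· ∣ ·) : ℕ → ℕ → Prop) :=
    (Primrec.eq.comp (Primrec.nat_mod.comp .snd .fst) (.const 0)).of_eq fun _ =>
      Nat.dvd_iff_mod_eq_zero.symm
  have hcommon : PrimrecRel fun (p : ℕ × ℕ) k => k ∣ p.1 ∧ k ∣ p.2 :=
    (hdvd.comp .snd (Primrec.fst.comp .fst)).and (hdvd.comp .snd (Primrec.snd.comp .fst))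
  refine (Primrec.nat_findGreatest (Primrec.nat_add.comp .fst .snd) hcommon).of_eq fun p =>
    Nat.findGreatest_eq_iff.2 ⟨?_, fun _ => ⟨Nat.gcd_dvd_left _ _, Nat.gcd_dvd_right _ _⟩,
      fun k hk hkle ⟨h₁, h₂⟩ => ?_⟩
  · rcases Nat.eq_zero_or_pos p.1 with h | h
    · simp [h]
    · exact (Nat.gcd_le_left _ h).trans (Nat.le_add_right _ _)
  · exact hk.not_ge (Nat.le_of_dvd (Nat.gcd_pos_iff.2 (by omega)) (Nat.dvd_gcd h₁ h₂))

variable {p : ℕ → Prop}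

theorem computable_nat_count [DecidablePred p] (hp : ComputablePred p) :
    Computable (Nat.count p) :=
  (Computable.nat_rec .id (.const 0) (Computable.cond (hp.decide.comp (Computable.fst.comp .snd))
    (Computable.succ.comp (Computable.snd.comp .snd)) (Computable.snd.comp .snd)).to₂).of_eq
      fun n => by
        induction n with
        | zero => rfl
        | succ n ih =>
          simp only [id_eq] at ih
          by_cases h : p n <;> simp [Nat.count_succ, h, ih]

theorem computable_nat_nth (hp : ComputablePred p) (hinf : (Set.ofPred p).Infinite) :
    Computable (Nat.nth p) := by
  classical
  have hcount : ComputablePred fun q : ℕ × ℕ => q.1 < Nat.count p (q.2 + 1) :=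
    computablePred_comp Primrec.nat_lt.computablePred
      (Computable.fst.pair ((computable_nat_count hp).comp (Computable.succ.comp .snd)))
  have hexists (n : ℕ) : ∃ m, n < Nat.count p (m + 1) :=
    ⟨Nat.nth p n, (Nat.lt_nth_iff_count_lt hinf).2 (Nat.lt_succ_self _)⟩
  refine (Computable.find hcount hexists).of_eq fun n => (Nat.find_eq_iff _).2 ?_
  simp [Nat.lt_nth_iff_count_lt hinf, Order.lt_add_one_iff]

end NaturalNumbers

section Encodings

variable {α : Type*} [Encodable α] [Infinite α]

-- `Denumerable.ofEncodableOfInfinite` numbers the codes of the given encoding in increasing order.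
theorem nth_mem_range_encode (x : α) :
    Nat.nth (· ∈ Set.range (encode : α → ℕ))
      (@encode α (Denumerable.ofEncodableOfInfinite α).toEncodable x) = encode x := by
  have hinf : (Set.range (encode : α → ℕ)).Infinite :=
    Set.infinite_range_of_injective encode_injective
  let := decidableRangeEncode α
  have := hinf.to_subtype
  set n := @encode α (Denumerable.ofEncodableOfInfinite α).toEncodable x
  calc Nat.nth (· ∈ Set.range (encode : α → ℕ)) n
      = Nat.Subtype.ofNat (Set.range (encode : α → ℕ)) n := by
        rw [← Nat.Subtype.orderIsoOfNat_apply]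
        exact Nat.nth_apply_eq_orderIsoOfNat (p := (· ∈ Set.range (encode : α → ℕ))) hinf n
    _ = encode ((equivRangeEncode α).symm (Nat.Subtype.ofNat _ n)) :=
      congrArg Subtype.val ((equivRangeEncode α).apply_symm_apply _).symm
    _ = encode x := congrArg encode (@Denumerable.ofNat_encode α (.ofEncodableOfInfinite α) x)

theorem computable_encode_of_computablePred_range
    (h : ComputablePred (· ∈ Set.range (encode : α → ℕ))) :
    @Computable α ℕ (@Primcodable.ofDenumerable α (.ofEncodableOfInfinite α)) _ encode := by
  let inst := Denumerable.ofEncodableOfInfinite α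
  exact ((computable_nat_nth h (Set.infinite_range_of_injective encode_injective)).comp
    (@Computable.encode α _)).of_eq nth_mem_range_encode

end Encodings

section Integers

theorem encode_int (z : ℤ) :
    encode z = if 0 ≤ z then 2 * z.natAbs else 2 * z.natAbs - 1 := by
  cases z with
  | ofNat n => exact (if_pos (Int.natCast_nonneg n)).symm
  | negSucc n => exact (if_neg (Int.negSucc_not_nonneg n).1).symm

theorem primrec_int_natAbs : Primrec Int.natAbs :=
  (Primrec.nat_div.comp (Primrec.succ.comp .encode) (.const 2)).of_eq fun z => by
    rw [encode_int]; split_ifs <;> omega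

theorem primrec_int_toNat : Primrec Int.toNat := by
  refine (Primrec.ite (Primrec.eq.comp (Primrec.nat_mod.comp .encode (.const 2)) (.const 0))
    primrec_int_natAbs (.const 0)).of_eq fun z => ?_
  rw [encode_int]
  split_ifs <;> omega

theorem primrec_int_toNat_neg : Primrec fun z : ℤ => (-z).toNat :=
  (Primrec.nat_sub.comp primrec_int_natAbs primrec_int_toNat).of_eq fun z => by omega

theorem primrec_nat_sub_int : Primrec₂ fun m n : ℕ => (m : ℤ) - n := by
  refine Primrec.encode_iff.1 <| (Primrec.ite (Primrec.nat_le.comp .snd .fst)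
    (Primrec.nat_mul.comp (.const 2) (Primrec.nat_sub.comp .fst .snd))
    (Primrec.pred.comp (Primrec.nat_mul.comp (.const 2) (Primrec.nat_sub.comp .snd .fst)))).of_eq
      fun p => ?_
  dsimp only
  rw [encode_int, Nat.pred_eq_sub_one]
  split_ifs <;> omega

theorem primrec_int_sub : Primrec₂ ((· - ·) : ℤ → ℤ → ℤ) :=
  (primrec_nat_sub_int.comp
    (Primrec.nat_add.comp (primrec_int_toNat.comp .fst) (primrec_int_toNat_neg.comp .snd))
    (Primrec.nat_add.comp (primrec_int_toNat_neg.comp .fst) (primrec_int_toNat.comp .snd))).of_eq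
      fun p => by dsimp only; omega

theorem primrec_int_mul : Primrec₂ ((· * ·) : ℤ → ℤ → ℤ) := by
  have hmul {f g : ℤ → ℕ} (hf : Primrec f) (hg : Primrec g) :
      Primrec₂ fun x y => f x * g y := Primrec.nat_mul.comp (hf.comp .fst) (hg.comp .snd)
  have pos := primrec_int_toNat
  have neg := primrec_int_toNat_neg
  refine (primrec_nat_sub_int.comp (Primrec.nat_add.comp (hmul pos pos) (hmul neg neg))
    (Primrec.nat_add.comp (hmul pos neg) (hmul neg pos))).of_eq fun ⟨x, y⟩ => ?_
  calc ((x.toNat * y.toNat + (-x).toNat * (-y).toNat : ℕ) : ℤ)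
        - (x.toNat * (-y).toNat + (-x).toNat * y.toNat : ℕ)
      = (x.toNat - (-x).toNat) * (y.toNat - (-y).toNat) := by push_cast; ring
    _ = x * y := by rw [Int.toNat_sub_toNat_neg, Int.toNat_sub_toNat_neg]

theorem primrec_int_natCast : Primrec (Nat.cast : ℕ → ℤ) :=
  (primrec_nat_sub_int.comp .id (.const 0)).of_eq fun n => sub_zero (n : ℤ)

end Integers

section Rationals

/-- Rationals as reduced fractions. `Rat.instEncodable` codes a rational by its reduced fraction,
and the conditions on the fraction are primitive recursive. -/
def ratEquiv : ℚ ≃ {p : ℤ × ℕ // 0 < p.2 ∧ p.1.natAbs.Coprime p.2} where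
  toFun q := ⟨(q.num, q.den), q.den_pos, q.reduced⟩
  invFun p := ⟨p.1.1, p.1.2, p.2.1.ne', p.2.2⟩
  left_inv _ := rfl
  right_inv _ := rfl

theorem computablePred_range_encode_rat :
    ComputablePred (· ∈ Set.range (@encode ℚ Rat.instEncodable)) := by
  let := Primcodable.subtype (p := fun p : ℤ × ℕ => 0 < p.2 ∧ p.1.natAbs.Coprime p.2) <|
    (Primrec.nat_lt.comp (.const 0) .snd).and <|
      Primrec.eq.comp (primrec_nat_gcd.comp (primrec_int_natAbs.comp .fst) .snd) (.const 1)
  refine ((Primcodable.mem_range_encode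
    (α := {p : ℤ × ℕ // 0 < p.2 ∧ p.1.natAbs.Coprime p.2})).of_eq fun n => ?_).computablePred
  rw [← ratEquiv.surjective.range_comp encode]
  rfl

theorem computable_rat_num_den : Computable fun q : ℚ => (q.num, q.den) :=
  (Computable.encode_iff (f := fun q : ℚ => (q.num, q.den))).1
    (computable_encode_of_computablePred_range computablePred_range_encode_rat)

end Rationals

section Escapes

variable {R : Type*} [CommRing R] [LinearOrder R] [IsStrictOrderedRing R] {c w x y z : R}

/-- `z` lies strictly inside the middle half of the segment with endpoints `x` and `y`: its signed
distances `z - x` and `y - z` differ by less than half the length of the segment. -/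
def IsCentral (x y z : R) : Prop := 2 * |(z - x) - (y - z)| < |x - y|

/-- The distance from `x` to `z` is more than twice the length of the segment with endpoints
`x` and `y`. -/
def IsDistant (x y z : R) : Prop := 2 * |x - y| < |x - z|

/-- `z` is an exit from the segment with endpoints `x` and `y`: it is central or distant. -/
def Escapes (x y z : R) : Prop := IsCentral x y z ∨ IsDistant x y z

theorem lt_iff_lt_of_not_isDistant (hw : IsDistant x y w) (hz : ¬IsDistant x y z) :
    z < w ↔ x < w := by
  have hxz : |x - z| < |x - w| := (not_lt.1 hz).trans_lt hw
  grind

theorem escapes_mul_left_iff (hc : 0 < c) :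
    Escapes (c * x) (c * y) (c * z) ↔ Escapes x y z := by
  simp only [Escapes, IsCentral, IsDistant, ← mul_sub, abs_mul, abs_of_pos hc,
    mul_left_comm (2 : R) c, mul_lt_mul_iff_right₀ hc]

theorem escapes_intCast_iff {x y z : ℤ} : Escapes (x : R) y z ↔ Escapes x y z := by
  simp only [Escapes, IsCentral, IsDistant]; norm_cast

theorem escapes_ratCast_iff {K : Type*} [Field K] [LinearOrder K] [IsStrictOrderedRing K]
    {x y z : ℚ} : Escapes (x : K) y z ↔ Escapes x y z := by
  simp only [Escapes, IsCentral, IsDistant]; norm_cast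

theorem primrecPred_escapes_int : PrimrecPred fun p : ℤ × ℤ × ℤ => Escapes p.1 p.2.1 p.2.2 := by
  have hdist {f g : ℤ × ℤ × ℤ → ℤ} (hf : Primrec f) (hg : Primrec g) :
      Primrec fun p => (f p - g p).natAbs := primrec_int_natAbs.comp (primrec_int_sub.comp hf hg)
  have htwice {f : ℤ × ℤ × ℤ → ℕ} (hf : Primrec f) : Primrec fun p => 2 * f p :=
    Primrec.nat_mul.comp (.const 2) hf
  have hx : Primrec fun p : ℤ × ℤ × ℤ => p.1 := .fst
  have hy : Primrec fun p : ℤ × ℤ × ℤ => p.2.1 := Primrec.fst.comp .snd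
  have hz : Primrec fun p : ℤ × ℤ × ℤ => p.2.2 := Primrec.snd.comp .snd
  have hcentral := Primrec.nat_lt.comp
    (htwice (hdist (primrec_int_sub.comp hz hx) (primrec_int_sub.comp hy hz))) (hdist hx hy)
  have hdistant := Primrec.nat_lt.comp (htwice (hdist hx hy)) (hdist hx hz)
  refine (hcentral.or hdistant).of_eq fun p => ?_
  simp only [Escapes, IsCentral, IsDistant, Int.abs_eq_natAbs]
  norm_cast

theorem escapes_iff_clear_denominators (x y z : ℚ) :
    Escapes x y z ↔ Escapes (x.num * (y.den * z.den : ℕ)) (y.num * (x.den * z.den : ℕ))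
      (z.num * (x.den * y.den : ℕ)) := by
  have hden : (0 : ℚ) < x.den * y.den * z.den := by positivity
  rw [← escapes_mul_left_iff hden, ← escapes_intCast_iff (R := ℚ)]
  have hx : (x.den * y.den * z.den : ℚ) * x = x.num * (y.den * z.den) := by
    linear_combination (y.den * z.den : ℚ) * x.mul_den_eq_num
  have hy : (x.den * y.den * z.den : ℚ) * y = y.num * (x.den * z.den) := by
    linear_combination (x.den * z.den : ℚ) * y.mul_den_eq_num
  have hz : (x.den * y.den * z.den : ℚ) * z = z.num * (x.den * y.den) := by
    linear_combination (x.den * y.den : ℚ) * z.mul_den_eq_num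
  push_cast
  rw [hx, hy, hz]

theorem computablePred_escapes_rat :
    ComputablePred fun p : ℚ × ℚ × ℚ => Escapes p.1 p.2.1 p.2.2 := by
  have hx : Computable fun p : ℚ × ℚ × ℚ => (p.1.num, p.1.den) := computable_rat_num_den.comp .fst
  have hy : Computable fun p : ℚ × ℚ × ℚ => (p.2.1.num, p.2.1.den) :=
    computable_rat_num_den.comp (Computable.fst.comp .snd)
  have hz : Computable fun p : ℚ × ℚ × ℚ => (p.2.2.num, p.2.2.den) :=
    computable_rat_num_den.comp (Computable.snd.comp .snd)
  have hcleared {f g h : ℚ × ℚ × ℚ → ℤ × ℕ} (hf : Computable f) (hg : Computable g)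
      (hh : Computable h) : Computable fun p => (f p).1 * ((g p).2 * (h p).2 : ℕ) :=
    primrec_int_mul.to_comp.comp (Computable.fst.comp hf) <| primrec_int_natCast.to_comp.comp <|
      Primrec.nat_mul.to_comp.comp (Computable.snd.comp hg) (Computable.snd.comp hh)
  refine (computablePred_comp primrecPred_escapes_int.computablePred ((hcleared hx hy hz).pair
    ((hcleared hy hx hz).pair (hcleared hz hx hy)))).of_eq fun ⟨x, y, z⟩ => ?_
  exact (escapes_iff_clear_denominators x y z).symm

end Escapes

section Sides

variable {G : Type*} [AddCommGroup G] [LinearOrder G] [IsOrderedAddMonoid G] {α x y : G}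

theorem abs_sub_eq_abs_abs_sub_abs_of_same_side (hside : x < α ↔ y < α) :
    |x - y| = |(|x - α| - |y - α|)| := by
  grind

theorem abs_sub_eq_add_of_opposite_sides (hside : ¬(x < α ↔ y < α)) :
    |x - y| = |x - α| + |y - α| := by
  grind

theorem abs_add_eq_abs_abs_sub_abs_of_opposite_sides (hside : ¬(x < α ↔ y < α)) :
    |(x - α) + (y - α)| = |(|x - α| - |y - α|)| := by
  grind

end Sides

section ComparableErrors

variable {K : Type*} [Field K] [LinearOrder K] [IsStrictOrderedRing K] {α x y z : K}

/-- As approximations of `α`, neither of `x` and `y` is better than the other by a factor `9 / 10`;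
any factor close enough to `1` would do. In particular `x` and `y` differ from `α`. -/
def ComparableErrors (α x y : K) : Prop :=
  9 / 10 * |x - α| < |y - α| ∧ 9 / 10 * |y - α| < |x - α|

namespace ComparableErrors

theorem isDistant (h : ComparableErrors α x y) (hside : x < α ↔ y < α) : IsDistant x y α := by
  rw [IsDistant, abs_sub_eq_abs_abs_sub_abs_of_same_side hside]
  rcases abs_cases (|x - α| - |y - α|) with h' | h' <;> linarith [h.1, h.2]

theorem isCentral (h : ComparableErrors α x y) (hside : ¬(x < α ↔ y < α)) :
    IsCentral x y α := by
  have hmid : |(α - x) - (y - α)| = |(|x - α| - |y - α|)| := by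
    rw [← abs_add_eq_abs_abs_sub_abs_of_opposite_sides hside, ← abs_neg]
    ring_nf
  rw [IsCentral, hmid, abs_sub_eq_add_of_opposite_sides hside]
  rcases abs_cases (|x - α| - |y - α|) with h' | h' <;> linarith [h.1, h.2]

theorem escapes (h : ComparableErrors α x y) : Escapes x y α :=
  (em (x < α ↔ y < α)).elim (fun hside => .inr (h.isDistant hside))
    fun hside => .inl (h.isCentral hside)

theorem abs_sub_le_of_isCentral (h : ComparableErrors α x y) (hside : ¬(x < α ↔ y < α))
    (hz : IsCentral x y z) : |z - α| ≤ 9 / 10 * |x - α| := by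
  have htri : 2 * |z - α| ≤ |(z - x) - (y - z)| + |(x - α) + (y - α)| :=
    calc 2 * |z - α| = |((z - x) - (y - z)) + ((x - α) + (y - α))| := by
          rw [← abs_two, ← abs_mul]
          ring_nf
      _ ≤ _ := abs_add_le _ _
  rw [IsCentral, abs_sub_eq_add_of_opposite_sides hside] at hz
  rw [abs_add_eq_abs_abs_sub_abs_of_opposite_sides hside] at htri
  rcases abs_cases (|x - α| - |y - α|) with h' | h' <;> linarith [h.1, h.2]

theorem abs_sub_le_of_isDistant (h : ComparableErrors α x y) (hside : ¬(x < α ↔ y < α))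
    (hz : IsDistant x y z) : |x - α| ≤ 9 / 10 * |z - α| := by
  rw [IsDistant, abs_sub_eq_add_of_opposite_sides hside] at hz
  have htri : |x - z| ≤ |x - α| + |z - α| := abs_sub_comm α z ▸ abs_sub_le x α z
  linarith [h.1, abs_nonneg (x - α)]

theorem abs_sub_le_or_le_of_escapes (h : ComparableErrors α x y) (hside : ¬(x < α ↔ y < α))
    (hz : Escapes x y z) : |z - α| ≤ 9 / 10 * |x - α| ∨ |x - α| ≤ 9 / 10 * |z - α| :=
  hz.imp (h.abs_sub_le_of_isCentral hside) (h.abs_sub_le_of_isDistant hside)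

end ComparableErrors

end ComparableErrors

section Orders

theorem frequently_switch {P : ℕ → Prop} (hP : ∃ᶠ s in atTop, P s) (hnP : ∃ᶠ s in atTop, ¬P s) :
    ∃ᶠ s in atTop, ¬(P s ↔ P (s + 1)) := by
  intro hconst
  obtain ⟨N, hN⟩ := eventually_atTop.1 hconst
  have hiff (s : ℕ) (hs : N ≤ s) : P N ↔ P s :=
    Nat.le_induction .rfl (fun t ht ih => ih.trans (not_not.1 (hN t ht))) s hs
  obtain ⟨s, hs, hPs⟩ := frequently_atTop.1 hP N
  obtain ⟨t, ht, hnPt⟩ := frequently_atTop.1 hnP N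
  exact hnPt ((hiff t ht).1 ((hiff s hs).2 hPs))

theorem IsComputableOrder.comp {f g : ℕ → ℕ} (hf : IsComputableOrder f)
    (hg : IsComputableOrder g) : IsComputableOrder (f ∘ g) :=
  ⟨hf.1.comp hg.1, hf.2.1.comp hg.2.1, hf.2.2.comp hg.2.2⟩

theorem isComputableOrder_succ : IsComputableOrder Nat.succ :=
  ⟨.succ, Order.succ_mono, tendsto_add_atTop_nat 1⟩

theorem isComputableOrder_pred : IsComputableOrder Nat.pred :=
  ⟨Primrec.pred.to_comp, Order.pred_mono, tendsto_sub_atTop_nat 1⟩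

variable {h : ℕ → ℕ}

theorem eventually_forall_lt_le (h : ℕ → ℕ) (n : ℕ) : ∀ᶠ t in atTop, ∀ r < n, h r ≤ t := by
  filter_upwards [eventually_ge_atTop ((Finset.range n).sup h)] with t ht r hr
  exact (Finset.le_sup (Finset.mem_range.2 hr)).trans ht

theorem exists_isComputableOrder_isLeast (hh : Computable h) (hub : ∀ t, ∃ r, t < h r) :
    ∃ f, IsComputableOrder f ∧ ∀ t, IsLeast {r | t < h r} (f t) := by
  refine ⟨fun t => Nat.find (hub t), ⟨Computable.find ?_ hub, ?_, ?_⟩, fun t =>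
    Nat.isLeast_find (hub t)⟩
  · exact computablePred_comp Primrec.nat_lt.computablePred (Computable.fst.pair (hh.comp .snd))
  · exact fun t u htu => Nat.find_mono fun r => htu.trans_lt
  · exact tendsto_atTop.2 fun n => (eventually_forall_lt_le h n).mono fun t ht =>
      (Nat.le_find_iff _ _).2 fun r hr => (ht r hr).not_gt

/-- `h` attains at `r` a larger value than at every earlier index. Monotone functions are made to
agree with `h`, and with an inverse of `h`, at the records of `h`. -/
def IsRecord (h : ℕ → ℕ) (r : ℕ) : Prop := ∀ i < r, h i < h r

theorem isRecord_of_isLeast {r t : ℕ} (hr : IsLeast {r | t < h r} r) : IsRecord h r :=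
  fun _ hi => (not_lt.1 fun hlt => (hr.2 hlt).not_gt hi).trans_lt hr.1

theorem exists_isComputableOrder_eq_on_records (hh : Computable h) (hub : ∀ t, ∃ r, t < h r) :
    ∃ f, IsComputableOrder f ∧ ∀ r, IsRecord h r → f r = h r := by
  obtain ⟨g, hg, hgleast⟩ := exists_isComputableOrder_isLeast hh hub
  -- Inverting twice turns `h` into its running maximum.
  obtain ⟨f, hf, hfleast⟩ := exists_isComputableOrder_isLeast hg.1 fun t =>
    (hg.2.2.eventually_gt_atTop t).exists
  refine ⟨f, hf, fun r hr => (hfleast r).unique ⟨?_, fun t ht => ?_⟩⟩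
  · have hlt : h r < h (g (h r)) := (hgleast (h r)).1
    change r < g (h r)
    by_contra! hle
    rcases hle.eq_or_lt with heq | hgr
    · exact hlt.ne (congrArg h heq).symm
    · exact hlt.not_gt (hr _ hgr)
  · by_contra! hlt
    exact ht.not_ge ((hgleast t).2 hlt)

theorem exists_isComputableOrder_leftInvOn_records (hh : Computable h) (hlt : ∀ s, s < h s) :
    ∃ f, IsComputableOrder f ∧ ∀ r, IsRecord h r → f (h r) = r := by
  obtain ⟨g, hg, hgleast⟩ := exists_isComputableOrder_isLeast hh fun t => ⟨t, hlt t⟩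
  refine ⟨g ∘ Nat.pred, hg.comp isComputableOrder_pred, fun r hr => (hgleast _).unique
    ⟨Nat.pred_lt (hlt r).ne_bot, fun i hi => ?_⟩⟩
  by_contra! hir
  exact hi.not_ge (Nat.le_pred_of_lt (hr i hir))

theorem eventually_exists_isLeast_ge (hub : ∀ t, ∃ r, t < h r) (n : ℕ) :
    ∀ᶠ t in atTop, ∃ r ≥ n, IsLeast {r | t < h r} r := by
  filter_upwards [eventually_forall_lt_le h n] with t ht
  exact ⟨_, (Nat.le_find_iff (hub t) n).2 fun r hr => (ht r hr).not_gt, Nat.isLeast_find (hub t)⟩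

end Orders

section ExitTimes

variable {K : Type*} [Field K] [LinearOrder K] [IsStrictOrderedRing K] {α : K} {x : ℕ → K}

theorem switch_of_isLeast_escapes {r s t : ℕ} (hcomp : ComparableErrors α (x r) (x (r + 1)))
    (ht : IsLeast {t | r + 1 < t ∧ Escapes (x r) (x (r + 1)) (x t)} t)
    (hrs : r ≤ s) (hst : s + 1 < t) (hswitch : ¬(x s < α ↔ x (s + 1) < α)) :
    ¬(x r < α ↔ x (r + 1) < α) := by
  intro hside
  have hstay (u : ℕ) (hru : r ≤ u) (hut : u < t) : x u < α ↔ x r < α := by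
    rcases (by lia : u = r ∨ u = r + 1 ∨ r + 1 < u) with rfl | rfl | hu
    · rfl
    · exact hside.symm
    · exact lt_iff_lt_of_not_isDistant (hcomp.isDistant hside) fun hdistant =>
        hut.not_ge (ht.2 ⟨hu, .inr hdistant⟩)
  exact hswitch ((hstay s hrs (by lia)).trans (hstay (s + 1) (by lia) hst).symm)

theorem frequently_isRecord_and_abs_sub_le {h : ℕ → ℕ}
    (hcomp : ∀ᶠ s in atTop, ComparableErrors α (x s) (x (s + 1))) (hlt : ∀ s, s < h s)
    (hleast : ∀ᶠ s in atTop,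
      IsLeast {t | s + 1 < t ∧ Escapes (x s) (x (s + 1)) (x t)} (h s))
    (hswitch : ∃ᶠ s in atTop, ¬(x s < α ↔ x (s + 1) < α)) :
    ∃ᶠ r in atTop, IsRecord h r ∧
      (|x (h r) - α| ≤ 9 / 10 * |x r - α| ∨ |x r - α| ≤ 9 / 10 * |x (h r) - α|) := by
  refine frequently_atTop.2 fun M => ?_
  obtain ⟨N, hN⟩ := eventually_atTop.1 (hcomp.and hleast)
  have hrecord := (tendsto_add_atTop_nat 1).eventually
    (eventually_exists_isLeast_ge (fun t => ⟨t, hlt t⟩) (max M N))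
  obtain ⟨s, hs, hNs, r, hr, hrleast⟩ :=
    (hswitch.and_eventually ((eventually_ge_atTop N).and hrecord)).exists
  obtain ⟨hcomp_r, hexit⟩ := hN r ((le_max_right M N).trans hr)
  have hrs : r ≤ s := hrleast.2 (hN s hNs).2.1.1
  have hside := switch_of_isLeast_escapes hcomp_r hexit hrs hrleast.1 hs
  exact ⟨r, (le_max_left M N).trans hr, isRecord_of_isLeast hrleast,
    hcomp_r.abs_sub_le_or_le_of_escapes hside hexit.1.2⟩

end ExitTimes

section Speed

variable {a : ℕ → ℚ} {α : ℝ}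

theorem eventually_lt_of_not_isRhoSpeedable {ρ : ℚ} (hρ : ¬IsRhoSpeedable a α ρ) {f : ℕ → ℕ}
    (hf : IsComputableOrder f) : ∀ᶠ s in atTop, ρ * |a s - α| < |a (f s) - α| := by
  obtain ⟨hirrational, hslow⟩ := not_or.1 hρ
  have hliminf : ((ρ : ℝ) : EReal) < speedLiminf a f α := not_le.1 fun hle => hslow ⟨f, hf, hle⟩
  filter_upwards [eventually_lt_of_lt_liminf hliminf] with s hs
  have hpos : 0 < |α - a s| := abs_pos.2 (sub_ne_zero.2 fun heq => hirrational ⟨a s, heq⟩)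
  rwa [EReal.coe_lt_coe_iff, abs_div, lt_div_iff₀ hpos, abs_sub_comm, abs_sub_comm α] at hs

theorem exists_escapes_of_tendsto {u : ℕ → ℝ} {x y : ℝ} (hlim : Tendsto u atTop (nhds α))
    (hα : Escapes x y α) (s : ℕ) : ∃ t, s < t ∧ Escapes x y (u t) := by
  have hopen : IsOpen {z | Escapes x y z} :=
    (isOpen_lt (f := fun z => 2 * |(z - x) - (y - z)|) (by fun_prop) continuous_const).union
      (isOpen_lt (g := fun z => |x - z|) continuous_const (by fun_prop))
  exact ((eventually_gt_atTop s).and (hlim.eventually (hopen.mem_nhds hα))).exists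

theorem exists_computable_isLeast_escapes (ha : Computable a)
    (hex : ∀ᶠ s in atTop, ∃ t, s + 1 < t ∧ Escapes (a s : ℝ) (a (s + 1)) (a t)) :
    ∃ h : ℕ → ℕ, Computable h ∧ (∀ s, s < h s) ∧ ∀ᶠ s in atTop,
      IsLeast {t | s + 1 < t ∧ Escapes (a s : ℝ) (a (s + 1)) (a t)} (h s) := by
  simp only [escapes_ratCast_iff] at hex ⊢
  classical
  obtain ⟨N, hN⟩ := eventually_atTop.1 hex
  -- The alternative `s < N` makes the search succeed for every `s`.
  let P (s t : ℕ) : Prop := s + 1 < t ∧ (s < N ∨ Escapes (a s) (a (s + 1)) (a t))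
  have hP : ComputablePred fun p : ℕ × ℕ => P p.1 p.2 := by
    have hsucc : Computable fun p : ℕ × ℕ => p.1 + 1 := Computable.succ.comp .fst
    have hgt : ComputablePred fun p : ℕ × ℕ => p.1 + 1 < p.2 :=
      computablePred_comp Primrec.nat_lt.computablePred (hsucc.pair .snd)
    have hlt : ComputablePred fun p : ℕ × ℕ => p.1 < N :=
      computablePred_comp Primrec.nat_lt.computablePred (Computable.fst.pair (.const N))
    have htriple : Computable fun p : ℕ × ℕ => (a p.1, a (p.1 + 1), a p.2) :=
      (ha.comp .fst).pair ((ha.comp hsucc).pair (ha.comp .snd))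
    have hescapes := computablePred_comp computablePred_escapes_rat htriple
    exact computablePred_and hgt (computablePred_or hlt hescapes)
  have hexP (s : ℕ) : ∃ t, P s t := by
    rcases lt_or_ge s N with hs | hs
    · exact ⟨s + 2, by lia, .inl hs⟩
    · exact (hN s hs).imp fun t ht => ⟨ht.1, .inr ht.2⟩
  refine ⟨_, Computable.find hP hexP, fun s => (Nat.lt_succ_self s).trans
    (Nat.find_spec (hexP s)).1, eventually_atTop.2 ⟨N, fun s hs => ⟨?_, fun t ht => ?_⟩⟩⟩
  · exact (Nat.find_spec (hexP s)).imp_right fun h => h.resolve_left hs.not_gt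
  · exact Nat.find_min' (hexP s) ⟨ht.1, .inr ht.2⟩

theorem eventually_comparableErrors (hslow : ¬IsRhoSpeedable a α (9 / 10)) :
    ∀ᶠ s in atTop, ComparableErrors α (a s : ℝ) (a (s + 1)) := by
  have hsucc := eventually_lt_of_not_isRhoSpeedable hslow isComputableOrder_succ
  have hpred := (tendsto_add_atTop_nat 1).eventually
    (eventually_lt_of_not_isRhoSpeedable hslow isComputableOrder_pred)
  filter_upwards [hsucc, hpred] with s hs hs'
  push_cast at hs hs'
  exact ⟨hs, hs'⟩

end Speed

theorem two_sided_approx_speedable_general (α : ℝ) (a : ℕ → ℚ) (ha : Computable a)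
    (hlim : Tendsto (fun s => (a s : ℝ)) atTop (nhds α))
    (hleft : ∃ᶠ s in atTop, (a s : ℝ) < α) (hright : ∃ᶠ s in atTop, α < (a s : ℝ)) :
    IsRhoSpeedable a α (9 / 10) := by
  by_contra hslow
  have hcomp := eventually_comparableErrors hslow
  have hswitch := frequently_switch hleft (hright.mono fun _ => not_lt_of_gt)
  obtain ⟨h, hh, hlt, hleast⟩ := exists_computable_isLeast_escapes ha <|
    hcomp.mono fun s hs => exists_escapes_of_tendsto hlim hs.escapes (s + 1)
  obtain ⟨f, hf, hfh⟩ := exists_isComputableOrder_eq_on_records hh fun t => ⟨t, hlt t⟩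
  obtain ⟨g, hg, hgh⟩ := exists_isComputableOrder_leftInvOn_records hh hlt
  have hf_slow := eventually_lt_of_not_isRhoSpeedable hslow hf
  have hg_slow := (tendsto_atTop_mono (fun s => (hlt s).le) tendsto_id).eventually
    (eventually_lt_of_not_isRhoSpeedable hslow hg)
  push_cast at hf_slow hg_slow
  obtain ⟨r, ⟨hrecord, hspeed⟩, hr_f, hr_g⟩ :=
    ((frequently_isRecord_and_abs_sub_le hcomp hlt hleast hswitch).and_eventually
      (hf_slow.and hg_slow)).exists
  rw [hfh r hrecord] at hr_f
  rw [hgh r hrecord] at hr_g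
  exact hspeed.elim hr_f.not_ge hr_g.not_ge

theorem two_sided_approx_speedable (α : ℝ) (hα : α ∈ Set.Ioo (0 : ℝ) 1)
    (a : ℕ → ℚ) (ha : IsCompApprox a α)
    (hleft : ∃ᶠ s in atTop, (a s : ℝ) < α)
    (hright : ∃ᶠ s in atTop, α < (a s : ℝ)) :
    IsSpeedable a α :=
  ⟨9 / 10, by norm_num, by norm_num,
    two_sided_approx_speedable_general α a ha.1 ha.2.2 hleft hright⟩
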